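/- (Sharp weighted L² bounds for the dyadic square function; Hukovic–Treil–Volberg and Petermichl–Pott.) There are absolute constants c, C > 0 such that for every weight w on ℝ with [w]_{A_2} < ∞ (and w^{-1} locally integrable) and every f ∈ L²(w): c · [w]_{A_2}^{−1/2} · ‖f‖_{L²(w)} ≤ ( ∑_{I∈D} |⟨f,h_I⟩|² ⟨w⟩_I )^{1/2} ≤ C · [w]_{A_2} · ‖f‖_{L²(w)}. (Here (∑_{I∈D} |⟨f,h_I⟩|² ⟨w⟩_I)^{1/2} equals ‖S^D f‖_{L²(w)}, the weighted L² norm of the dyadic square function.) -/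

import Mathlib

open MeasureTheory ENNReal

noncomputable section

/-- Average of `f` over a set `I ⊆ ℝ` with respect to Lebesgue measure. -/
def iAvg (I : Set ℝ) (f : ℝ → ℝ) : ℝ :=
  (volume I).toReal⁻¹ * ∫ x in I, f x

/-- A weight on `ℝ`: locally integrable and a.e. positive. -/
def IsWeight1 (w : ℝ → ℝ) : Prop :=
  MeasureTheory.LocallyIntegrable w volume ∧ ∀ᵐ x : ℝ, 0 < w x

/-- The standard dyadic interval `[k 2^{-j}, (k+1) 2^{-j})`. -/
def dyadInt (j k : ℤ) : Set ℝ :=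
  Set.Ico ((k : ℝ) * (2:ℝ) ^ (-j)) (((k : ℝ) + 1) * (2:ℝ) ^ (-j))

/-- The Haar function `h_I = |I|^{-1/2}(1_{I_r} - 1_{I_l})` of the dyadic interval `(j,k)`. -/
def haarFn (j k : ℤ) (x : ℝ) : ℝ :=
  (Real.sqrt ((volume (dyadInt j k)).toReal))⁻¹ *
    ((dyadInt (j + 1) (2 * k + 1)).indicator (fun _ => (1:ℝ)) x -
      (dyadInt (j + 1) (2 * k)).indicator (fun _ => (1:ℝ)) x)

/-- The Haar coefficient `⟨f, h_I⟩ = ∫ f h_I`. -/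
def haarCoeff (f : ℝ → ℝ) (j k : ℤ) : ℝ := ∫ x, f x * haarFn j k x

/-- The `A₂` characteristic `[w]_{A₂} = sup_I ⟨w⟩_I ⟨w⁻¹⟩_I` over all finite intervals. -/
def a2Const (w : ℝ → ℝ) : ℝ≥0∞ :=
  ⨆ q : {q : ℝ × ℝ // q.1 < q.2}, ENNReal.ofReal
    (iAvg (Set.Ioo q.1.1 q.1.2) w * iAvg (Set.Ioo q.1.1 q.1.2) (fun x => (w x)⁻¹))

/-- The weighted `L^p` norm `(∫ |f|^p w)^(1/p)` on `ℝ`. -/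
def wNorm (p : ℝ) (w f : ℝ → ℝ) : ℝ≥0∞ :=
  (∫⁻ x, ENNReal.ofReal |f x| ^ p * ENNReal.ofReal (w x)) ^ (1/p)

theorem sqrt_div_add_sqrt_div_le {ε δ : ℝ} (hε : |ε| < 1) (hδ : |δ| < 1) :
    (√((1 + ε) / (1 + δ)) + √((1 - ε) / (1 - δ))) / 2
      ≤ 1 - ε ^ 2 / 32 + 3 / 2 * (δ ^ 2 / (1 - δ ^ 2)) := by
  obtain ⟨hε1, hε2⟩ := abs_lt.1 hε
  obtain ⟨hδ1, hδ2⟩ := abs_lt.1 hδ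
  have h1 : 0 < 1 + δ := by linarith
  have h2 : 0 < 1 - δ := by linarith
  have h3 : 0 < 1 - δ ^ 2 := by nlinarith
  have hbound : ∀ u : ℝ, -1 < u → u < 1 → √(1 + u) ≤ 1 + u / 2 - u ^ 2 / 16 := by
    intro u hu1 hu2
    apply Real.sqrt_le_iff.2
    constructor
    · nlinarith
    · nlinarith [sq_nonneg (u ^ 2), mul_nonneg (sq_nonneg u) (by linarith : 0 ≤ 1 - u)]
  rw [Real.sqrt_div (by linarith), Real.sqrt_div (by linarith), div_eq_mul_inv √(1 + ε),
    div_eq_mul_inv √(1 - ε)]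
  set p := (√(1 + δ))⁻¹ with hp
  set q := (√(1 - δ))⁻¹ with hq
  set D := δ ^ 2 / (1 - δ ^ 2) with hD
  have hp0 : 0 < p := by positivity
  have hq0 : 0 < q := by positivity
  have hp2 : p ^ 2 = (1 + δ)⁻¹ := by rw [hp, inv_pow, Real.sq_sqrt h1.le]
  have hq2 : q ^ 2 = (1 - δ)⁻¹ := by rw [hq, inv_pow, Real.sq_sqrt h2.le]
  have hsum : p ^ 2 + q ^ 2 = 2 + 2 * D := by
    rw [hp2, hq2, hD]
    have : (1 - δ ^ 2) = (1 + δ) * (1 - δ) := by ring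
    rw [this]; field_simp; ring
  have hpq : 1 ≤ p * q := by
    have : (p * q) ^ 2 = (1 - δ ^ 2)⁻¹ := by
      rw [mul_pow, hp2, hq2, ← mul_inv]; congr 1; ring
    have h4 : 1 ≤ (p * q) ^ 2 := by
      rw [this]; exact (one_le_inv₀ h3).2 (by nlinarith [sq_nonneg δ])
    nlinarith [mul_pos hp0 hq0]
  have hD0 : 0 ≤ D := by positivity
  have hadd : p + q ≤ 2 + D := by nlinarith [sq_nonneg (p - 1), sq_nonneg (q - 1)]
  have hadd' : 2 ≤ p + q := by nlinarith [sq_nonneg (p - q)]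
  have hsub : (p - q) ^ 2 ≤ 2 * D := by nlinarith
  have e1 := hbound ε hε1 hε2
  have e2 := hbound (-ε) (by linarith) (by linarith)
  have e3 : √(1 + ε) * p ≤ (1 + ε / 2 - ε ^ 2 / 16) * p := by gcongr
  have e4 : √(1 - ε) * q ≤ (1 - ε / 2 - ε ^ 2 / 16) * q := by
    have : √(1 - ε) ≤ 1 - ε / 2 - ε ^ 2 / 16 := by
      have h : 1 + -ε / 2 - (-ε) ^ 2 / 16 = 1 - ε / 2 - ε ^ 2 / 16 := by ring
      rwa [h, ← sub_eq_add_neg] at e2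
    gcongr
  have e5 : (ε / 4) * (p - q) ≤ ε ^ 2 / 32 + (p - q) ^ 2 / 2 := by
    nlinarith [sq_nonneg (ε / 4 - (p - q))]
  have e6 : ε ^ 2 / 32 * 2 ≤ ε ^ 2 / 32 * (p + q) := by gcongr
  nlinarith

theorem sqrt_div_sub_sqrt_div_sq_le {ε δ : ℝ} (hε : |ε| < 1) (hδ : |δ| < 1) :
    (√((1 + ε) / (1 + δ)) - √((1 - ε) / (1 - δ))) ^ 2
      ≤ 3 * ε ^ 2 + 5 * (δ ^ 2 / (1 - δ ^ 2)) := by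
  obtain ⟨hε1, hε2⟩ := abs_lt.1 hε
  obtain ⟨hδ1, hδ2⟩ := abs_lt.1 hδ
  have h1 : 0 < 1 + δ := by linarith
  have h2 : 0 < 1 - δ := by linarith
  have h3 : 0 < 1 - δ ^ 2 := by nlinarith
  have h4 : 0 < 1 - ε ^ 2 := by nlinarith
  have hP : 0 ≤ (1 + ε) / (1 + δ) := div_nonneg (by linarith) h1.le
  have hR : 0 ≤ (1 - ε) / (1 - δ) := div_nonneg (by linarith) h2.le
  have hPR : 1 - ε ^ 2 ≤ √((1 + ε) / (1 + δ)) * √((1 - ε) / (1 - δ)) := by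
    rw [← Real.sqrt_mul hP]
    apply Real.le_sqrt_of_sq_le
    have : (1 + ε) / (1 + δ) * ((1 - ε) / (1 - δ)) = (1 - ε ^ 2) / (1 - δ ^ 2) := by
      rw [div_mul_div_comm]; congr 1 <;> ring
    rw [this, le_div_iff₀ h3]
    have h5 : (1 - ε ^ 2) ^ 2 ≤ (1 - ε ^ 2) := by nlinarith [sq_nonneg ε]
    nlinarith [sq_nonneg δ, sq_nonneg (1 - ε ^ 2)]
  have hsq : (1 + ε) / (1 + δ) + (1 - ε) / (1 - δ)
      = 2 * (1 - ε * δ) * (1 + δ ^ 2 / (1 - δ ^ 2)) := by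
    have : (1 - δ ^ 2) = (1 + δ) * (1 - δ) := by ring
    rw [this]; field_simp; ring
  have hD : δ ^ 2 ≤ δ ^ 2 / (1 - δ ^ 2) := by
    rw [le_div_iff₀ h3]; nlinarith [sq_nonneg δ, sq_nonneg (δ ^ 2)]
  have hεδ : -(ε * δ) ≤ 1 := by nlinarith
  have hεδ' : -(ε * δ) ≤ (ε ^ 2 + δ ^ 2) / 2 := by nlinarith [sq_nonneg (ε + δ)]
  have e1 : (√((1 + ε) / (1 + δ)) - √((1 - ε) / (1 - δ))) ^ 2
      = (1 + ε) / (1 + δ) + (1 - ε) / (1 - δ)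
        - 2 * (√((1 + ε) / (1 + δ)) * √((1 - ε) / (1 - δ))) := by
    rw [sub_sq, Real.sq_sqrt hP, Real.sq_sqrt hR]; ring
  rw [e1, hsq]
  set D := δ ^ 2 / (1 - δ ^ 2) with hDdef
  have hD0 : 0 ≤ D := by positivity
  nlinarith

/-- A function on the positive quadrant, strictly concave in the sense of `bellS_gain` on the region
`x * y ≤ Q` and comparable to `x` on the region `1 ≤ x * y`. -/
def bellS (Q x y : ℝ) : ℝ := 3 * x + √(x / (y * Q)) - 2 / y

theorem le_bellS {Q x y : ℝ} (hy : 0 < y) (hxy : 1 ≤ x * y) : x ≤ bellS Q x y := by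
  have h1 : 1 / y ≤ x := by rwa [div_le_iff₀ hy]
  have h2 : 2 / y = 2 * (1 / y) := by ring
  have := Real.sqrt_nonneg (x / (y * Q))
  unfold bellS; linarith

theorem sqrt_div_mul_le {Q x y : ℝ} (hx : 0 < x) (hy : 0 < y) (hxy : 1 ≤ x * y) (hQ : x * y ≤ Q) :
    √(x / (y * Q)) ≤ x := by
  have hQ0 : 0 < Q := by linarith
  apply Real.sqrt_le_iff.2 ⟨hx.le, ?_⟩
  rw [div_le_iff₀ (by positivity)]
  have : 1 ≤ x * y * Q := by nlinarith
  nlinarith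

theorem bellS_le {Q x y : ℝ} (hx : 0 < x) (hy : 0 < y) (hxy : 1 ≤ x * y) (hQ : x * y ≤ Q) :
    bellS Q x y ≤ 4 * x := by
  have h2 : 0 < 2 / y := by positivity
  have := sqrt_div_mul_le hx hy hxy hQ
  unfold bellS; linarith

set_option maxHeartbeats 1000000 in
theorem bellS_gain {Q x₁ x₂ y₁ y₂ : ℝ} (hx₁ : 0 < x₁) (hx₂ : 0 < x₂) (hy₁ : 0 < y₁) (hy₂ : 0 < y₂)
    (h₁ : 1 ≤ x₁ * y₁) (h₂ : 1 ≤ x₂ * y₂) (hQ : (x₁ + x₂) / 2 * ((y₁ + y₂) / 2) ≤ Q) :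
    ∃ g, 0 ≤ g ∧
      (bellS Q x₁ y₁ + bellS Q x₂ y₂) / 2 + g ≤ bellS Q ((x₁ + x₂) / 2) ((y₁ + y₂) / 2) ∧
      ((x₁ - x₂) / 2) ^ 2 ≤ 32 * Q * ((x₁ + x₂) / 2) * g ∧
      ((bellS Q x₁ y₁ - bellS Q x₂ y₂) / 2) ^ 2 ≤ 1000 * Q * ((x₁ + x₂) / 2) * g := by
  obtain ⟨x, hx⟩ : ∃ x, x = (x₁ + x₂) / 2 := ⟨_, rfl⟩
  obtain ⟨y, hy⟩ : ∃ y, y = (y₁ + y₂) / 2 := ⟨_, rfl⟩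
  rw [← hx, ← hy] at hQ ⊢
  have hx0 : 0 < x := by rw [hx]; positivity
  have hy0 : 0 < y := by rw [hy]; positivity
  obtain ⟨ε, hε⟩ : ∃ ε, ε = (x₁ - x₂) / 2 / x := ⟨_, rfl⟩
  obtain ⟨δ, hδ⟩ : ∃ δ, δ = (y₁ - y₂) / 2 / y := ⟨_, rfl⟩
  have hεx : (x₁ - x₂) / 2 = ε * x := by rw [hε]; field_simp
  have hδy : (y₁ - y₂) / 2 = δ * y := by rw [hδ]; field_simp
  have ex₁ : x₁ = x * (1 + ε) := by linarith
  have ex₂ : x₂ = x * (1 - ε) := by linarith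
  have ey₁ : y₁ = y * (1 + δ) := by linarith
  have ey₂ : y₂ = y * (1 - δ) := by linarith
  have aε : |ε| < 1 := by
    rw [ex₁] at hx₁; rw [ex₂] at hx₂
    exact abs_lt.2 ⟨by linarith [pos_of_mul_pos_right hx₁ hx0.le],
      by linarith [pos_of_mul_pos_right hx₂ hx0.le]⟩
  have aδ : |δ| < 1 := by
    rw [ey₁] at hy₁; rw [ey₂] at hy₂
    exact abs_lt.2 ⟨by linarith [pos_of_mul_pos_right hy₁ hy0.le],
      by linarith [pos_of_mul_pos_right hy₂ hy0.le]⟩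
  have k1 : 0 < 1 + δ := by linarith [(abs_lt.1 aδ).1]
  have k2 : 0 < 1 - δ := by linarith [(abs_lt.1 aδ).2]
  have k3 : 0 < 1 - δ ^ 2 := by nlinarith
  have hyy : 1 / (y₁ * y₂) ≤ x ^ 2 := by
    rw [div_le_iff₀ (by positivity)]
    have a1 : 1 ≤ (x₁ * y₁) * (x₂ * y₂) := by nlinarith
    have a2 : x₁ * x₂ ≤ x ^ 2 := by rw [hx]; nlinarith [sq_nonneg (x₁ - x₂)]
    nlinarith [mul_pos hy₁ hy₂]
  have hxy : 1 ≤ x * y := by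
    have a2 : y₁ * y₂ ≤ y ^ 2 := by rw [hy]; nlinarith [sq_nonneg (y₁ - y₂)]
    rw [div_le_iff₀ (by positivity)] at hyy
    have : 1 ≤ (x * y) ^ 2 := by nlinarith [sq_nonneg x]
    nlinarith [mul_pos hx0 hy0]
  have hQ0 : 0 < Q := by linarith
  set D := δ ^ 2 / (1 - δ ^ 2) with hD
  have hD0 : 0 ≤ D := by positivity
  set T := √(x / (y * Q)) with hT
  have hT0 : 0 ≤ T := Real.sqrt_nonneg _
  have hTx : T ≤ x := sqrt_div_mul_le hx0 hy0 hxy hQ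
  have hTlow : x / Q ≤ T := by
    apply Real.le_sqrt_of_sq_le
    rw [div_pow, div_le_div_iff₀ (by positivity) (by positivity)]
    nlinarith [mul_pos hx0 hQ0]
  have hThigh : T ≤ 1 / y := by
    apply Real.sqrt_le_iff.2 ⟨by positivity, ?_⟩
    rw [div_pow, div_le_div_iff₀ (by positivity) (by positivity)]
    nlinarith [mul_pos hy0 hQ0]
  have eT₁ : √(x₁ / (y₁ * Q)) = T * √((1 + ε) / (1 + δ)) := by
    rw [hT, ← Real.sqrt_mul (by positivity), ex₁, ey₁]; congr 1; field_simp
  have eT₂ : √(x₂ / (y₂ * Q)) = T * √((1 - ε) / (1 - δ)) := by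
    rw [hT, ← Real.sqrt_mul (by positivity), ex₂, ey₂]; congr 1; field_simp
  have hadd := sqrt_div_add_sqrt_div_le aε aδ
  have hsub := sqrt_div_sub_sqrt_div_sq_le aε aδ
  rw [← hD] at hadd hsub
  unfold bellS
  rw [eT₁, eT₂]
  generalize √((1 + ε) / (1 + δ)) = P at *
  generalize √((1 - ε) / (1 - δ)) = R at *
  have hinv : (2 / y₁ + 2 / y₂) / 2 = 2 / y + 2 * (1 / y) * D := by
    rw [ey₁, ey₂, hD, show 1 - δ ^ 2 = (1 + δ) * (1 - δ) by ring]; field_simp; ring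
  have hinv' : ((2 / y₁ - 2 / y₂) / 2) ^ 2 = 4 * D * (1 / (y₁ * y₂)) := by
    rw [ey₁, ey₂, hD, show 1 - δ ^ 2 = (1 + δ) * (1 - δ) by ring]; field_simp; ring
  have hQg : Q * x * (x / Q * (ε ^ 2 / 32 + D / 2)) = x ^ 2 * (ε ^ 2 / 32 + D / 2) := by
    field_simp
  refine ⟨x / Q * (ε ^ 2 / 32 + D / 2), by positivity, ?_, ?_, ?_⟩
  · have e1 : x / Q * (ε ^ 2 / 32 + D / 2) ≤ T * (ε ^ 2 / 32 + D / 2) := by gcongr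
    have e2 : T * ((P + R) / 2) ≤ T * (1 - ε ^ 2 / 32 + 3 / 2 * D) := by gcongr
    have e3 : T * D ≤ 1 / y * D := by gcongr
    linarith
  · rw [hεx, show ∀ a, 32 * Q * x * a = 32 * (Q * x * a) by intro a; ring, hQg]
    linarith [mul_nonneg (sq_nonneg x) hD0]
  · rw [show ∀ a, 1000 * Q * x * a = 1000 * (Q * x * a) by intro a; ring, hQg]
    have e0 : (3 * x₁ + T * P - 2 / y₁ - (3 * x₂ + T * R - 2 / y₂)) / 2
        = 3 * (ε * x) + T * ((P - R) / 2) - (2 / y₁ - 2 / y₂) / 2 := by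
      rw [← hεx]; ring
    have e1 : ∀ a b c : ℝ, (a + b - c) ^ 2 ≤ 3 * (a ^ 2 + b ^ 2 + c ^ 2) := by
      intro a b c
      nlinarith [sq_nonneg (a - b), sq_nonneg (a + c), sq_nonneg (b + c)]
    have e2 : (T * ((P - R) / 2)) ^ 2 ≤ x ^ 2 * ((3 * ε ^ 2 + 5 * D) / 4) := by
      rw [mul_pow]
      have : ((P - R) / 2) ^ 2 ≤ (3 * ε ^ 2 + 5 * D) / 4 := by linarith [div_pow (P - R) 2 2]
      gcongr
    have e3 : ((2 / y₁ - 2 / y₂) / 2) ^ 2 ≤ 4 * D * x ^ 2 := by rw [hinv']; gcongr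
    rw [e0]
    refine (e1 _ _ _).trans ?_
    linarith [mul_nonneg (sq_nonneg x) hD0, mul_nonneg (sq_nonneg x) (sq_nonneg ε)]

theorem sq_mul_bellS_step {Q x₁ x₂ y₁ y₂ : ℝ} (hx₁ : 0 < x₁) (hx₂ : 0 < x₂) (hy₁ : 0 < y₁)
    (hy₂ : 0 < y₂) (h₁ : 1 ≤ x₁ * y₁) (h₂ : 1 ≤ x₂ * y₂)
    (h : 1 ≤ (x₁ + x₂) / 2 * ((y₁ + y₂) / 2))
    (hQ : (x₁ + x₂) / 2 * ((y₁ + y₂) / 2) ≤ Q) (f₁ f₂ : ℝ) :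
    (f₁ ^ 2 * bellS Q x₁ y₁ + f₂ ^ 2 * bellS Q x₂ y₂) / 2
      ≤ ((f₁ + f₂) / 2) ^ 2 * bellS Q ((x₁ + x₂) / 2) ((y₁ + y₂) / 2)
        + 1004 * Q * (((f₁ - f₂) / 2) ^ 2 * ((x₁ + x₂) / 2)) := by
  obtain ⟨g, hg, hs, -, hσ⟩ := bellS_gain hx₁ hx₂ hy₁ hy₂ h₁ h₂ hQ
  have hs4 := bellS_le (by positivity) (by positivity) h hQ
  have hQ1 : 1 ≤ Q := by linarith
  generalize bellS Q x₁ y₁ = s₁ at *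
  generalize bellS Q x₂ y₂ = s₂ at *
  generalize bellS Q ((x₁ + x₂) / 2) ((y₁ + y₂) / 2) = s at *
  obtain ⟨x, hx⟩ : ∃ x, x = (x₁ + x₂) / 2 := ⟨_, rfl⟩
  have hx0 : 0 < x := by rw [hx]; positivity
  rw [← hx] at hs4 hσ ⊢
  obtain ⟨f, hf⟩ : ∃ f, f = (f₁ + f₂) / 2 := ⟨_, rfl⟩
  obtain ⟨φ, hφ⟩ : ∃ φ, φ = (f₁ - f₂) / 2 := ⟨_, rfl⟩
  obtain ⟨σ, hσ'⟩ : ∃ σ, σ = (s₁ - s₂) / 2 := ⟨_, rfl⟩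
  rw [← hf, ← hφ]
  rw [← hσ'] at hσ
  have e0 : (f₁ ^ 2 * s₁ + f₂ ^ 2 * s₂) / 2
      = (f ^ 2 + φ ^ 2) * ((s₁ + s₂) / 2) + 2 * f * φ * σ := by
    rw [hf, hφ, hσ']; ring
  have e1 : 2 * f * φ * σ ≤ f ^ 2 * g + 1000 * Q * x * φ ^ 2 := by
    have hb : 0 ≤ f ^ 2 * g + 1000 * Q * x * φ ^ 2 := by positivity
    apply le_of_sq_le_sq _ hb
    have : (f * φ) ^ 2 * σ ^ 2 ≤ (f * φ) ^ 2 * (1000 * Q * x * g) := by gcongr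
    nlinarith [sq_nonneg (f ^ 2 * g - 1000 * Q * x * φ ^ 2)]
  have e2 : (f ^ 2 + φ ^ 2) * ((s₁ + s₂) / 2) ≤ (f ^ 2 + φ ^ 2) * (s - g) := by
    gcongr; linarith
  have e3 : φ ^ 2 * s ≤ φ ^ 2 * (4 * Q * x) := by
    gcongr; nlinarith
  have e4 : 0 ≤ φ ^ 2 * g := by positivity
  rw [e0]; nlinarith

theorem sq_div_bellS_step {Q x₁ x₂ y₁ y₂ : ℝ} (hx₁ : 0 < x₁) (hx₂ : 0 < x₂) (hy₁ : 0 < y₁)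
    (hy₂ : 0 < y₂) (h₁ : 1 ≤ x₁ * y₁) (h₂ : 1 ≤ x₂ * y₂)
    (h : 1 ≤ (x₁ + x₂) / 2 * ((y₁ + y₂) / 2))
    (hQ : (x₁ + x₂) / 2 * ((y₁ + y₂) / 2) ≤ Q) (f₁ f₂ : ℝ) :
    ((f₁ - f₂) / 2) ^ 2 ≤ 1024 * Q * ((x₁ + x₂) / 2) *
      (((f₁ ^ 2 / x₁ + f₁ ^ 2 / bellS Q x₁ y₁) + (f₂ ^ 2 / x₂ + f₂ ^ 2 / bellS Q x₂ y₂)) / 2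
        - (((f₁ + f₂) / 2) ^ 2 / ((x₁ + x₂) / 2)
          + ((f₁ + f₂) / 2) ^ 2 / bellS Q ((x₁ + x₂) / 2) ((y₁ + y₂) / 2))) := by
  obtain ⟨g, hg, hs, he, -⟩ := bellS_gain hx₁ hx₂ hy₁ hy₂ h₁ h₂ hQ
  have hs4 := bellS_le (by positivity) (by positivity) h hQ
  have hQ1 : 1 ≤ Q := by linarith
  have hs₁ : 0 < bellS Q x₁ y₁ := hx₁.trans_le (le_bellS hy₁ h₁)
  have hs₂ : 0 < bellS Q x₂ y₂ := hx₂.trans_le (le_bellS hy₂ h₂)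
  generalize bellS Q x₁ y₁ = s₁ at *
  generalize bellS Q x₂ y₂ = s₂ at *
  generalize bellS Q ((x₁ + x₂) / 2) ((y₁ + y₂) / 2) = s at *
  have key : ∀ a b : ℝ, 0 < a → 0 < b →
      ((f₁ - f₂) / 2 - (f₁ + f₂) / 2 * ((a - b) / 2) / ((a + b) / 2)) ^ 2
        ≤ ((a + b) / 2) * ((f₁ ^ 2 / a + f₂ ^ 2 / b) / 2 - ((f₁ + f₂) / 2) ^ 2 / ((a + b) / 2)) := by
    intro a b ha hb
    have e : ((a + b) / 2) * ((f₁ ^ 2 / a + f₂ ^ 2 / b) / 2 - ((f₁ + f₂) / 2) ^ 2 / ((a + b) / 2))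
        - ((f₁ - f₂) / 2 - (f₁ + f₂) / 2 * ((a - b) / 2) / ((a + b) / 2)) ^ 2
        = (b * f₁ - a * f₂) ^ 2 * (a - b) ^ 2 / (4 * a * b * (a + b) ^ 2) := by
      field_simp; ring
    have : 0 ≤ (b * f₁ - a * f₂) ^ 2 * (a - b) ^ 2 / (4 * a * b * (a + b) ^ 2) := by positivity
    linarith
  have kx := key x₁ x₂ hx₁ hx₂
  have ks : ((f₁ + f₂) / 2) ^ 2 / ((s₁ + s₂) / 2) ≤ (f₁ ^ 2 / s₁ + f₂ ^ 2 / s₂) / 2 := by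
    have := (sq_nonneg _).trans (key s₁ s₂ hs₁ hs₂)
    have := nonneg_of_mul_nonneg_right this (by positivity)
    linarith
  obtain ⟨x, hx⟩ : ∃ x, x = (x₁ + x₂) / 2 := ⟨_, rfl⟩
  have hx0 : 0 < x := by rw [hx]; positivity
  rw [← hx] at hs4 he kx ⊢
  generalize (f₁ + f₂) / 2 = f at *
  generalize (f₁ - f₂) / 2 = φ at *
  generalize (x₁ - x₂) / 2 = e at *
  obtain ⟨t, ht⟩ : ∃ t, t = (s₁ + s₂) / 2 := ⟨_, rfl⟩
  have ht0 : 0 < t := by rw [ht]; positivity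
  rw [← ht] at hs ks
  have hs0 : 0 < s := by linarith
  have e1 : f ^ 2 * g / (16 * x ^ 2) ≤ f ^ 2 / t - f ^ 2 / s := by
    have : f ^ 2 / t - f ^ 2 / s = f ^ 2 * (s - t) / (t * s) := by field_simp
    rw [this]
    apply div_le_div₀
    · exact mul_nonneg (sq_nonneg f) (by linarith)
    · gcongr; linarith
    · positivity
    · nlinarith
  have e2 : (f * e / x) ^ 2 ≤ 512 * Q * x * (f ^ 2 * g / (16 * x ^ 2)) := by
    rw [div_pow, mul_pow, div_le_iff₀ (by positivity)]
    have : 512 * Q * x * (f ^ 2 * g / (16 * x ^ 2)) * x ^ 2 = f ^ 2 * (32 * Q * x * g) := by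
      field_simp; ring
    rw [this]; gcongr
  have e3 : φ ^ 2 ≤ 2 * (φ - f * e / x) ^ 2 + 2 * (f * e / x) ^ 2 := by
    nlinarith [sq_nonneg (φ - 2 * (f * e / x))]
  generalize f ^ 2 * g / (16 * x ^ 2) = G at *
  have hG1 : 0 ≤ x * ((f₁ ^ 2 / x₁ + f₂ ^ 2 / x₂) / 2 - f ^ 2 / x) := (sq_nonneg _).trans kx
  have e4 : x * ((f₁ ^ 2 / x₁ + f₂ ^ 2 / x₂) / 2 - f ^ 2 / x)
      ≤ Q * (x * ((f₁ ^ 2 / x₁ + f₂ ^ 2 / x₂) / 2 - f ^ 2 / x)) := le_mul_of_one_le_left hG1 hQ1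
  have e5 : Q * x * G ≤ Q * x * ((f₁ ^ 2 / s₁ + f₂ ^ 2 / s₂) / 2 - f ^ 2 / s) := by
    gcongr; linarith
  nlinarith

theorem tsum_int_eq_tsum_even_add_odd (v : ℤ → ℝ≥0∞) :
    ∑' k, v k = ∑' k, (v (2 * k) + v (2 * k + 1)) := by
  rw [← (Int.divModEquiv 2).symm.tsum_eq v, ENNReal.tsum_prod']
  congr 1; ext k
  rw [tsum_fintype, Fin.sum_univ_two]
  simp [Int.divModEquiv, mul_comm]

theorem tsum_dyadic_le_of_step {v g : ℤ → ℤ → ℝ≥0∞} {B : ℝ≥0∞}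
    (hstep : ∀ j k, v (j + 1) (2 * k) + v (j + 1) (2 * k + 1) + g j k ≤ v j k)
    (hB : ∀ j, ∑' k, v j k ≤ B) : ∑' p : ℤ × ℤ, g p.1 p.2 ≤ B := by
  have hsum : ∀ j, (∑' k, v (j + 1) k) + ∑' k, g j k ≤ ∑' k, v j k := fun j => by
    rw [tsum_int_eq_tsum_even_add_odd (v (j + 1)), ← ENNReal.tsum_add]
    exact ENNReal.tsum_le_tsum (hstep j)
  have hIco : ∀ (a : ℤ) (n : ℕ),
      (∑ i ∈ Finset.Ico a (a + n), ∑' k, g i k) + ∑' k, v (a + n) k ≤ ∑' k, v a k := by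
    intro a n
    induction n with
    | zero => simp
    | succ n ih =>
      have : Finset.Ico a (a + (n + 1 : ℕ)) = insert (a + n) (Finset.Ico a (a + n)) := by
        ext; simp; omega
      rw [this, Finset.sum_insert (by simp)]
      refine le_trans (le_of_eq ?_) ((add_le_add_right (hsum (a + n)) _).trans ih)
      push_cast
      rw [show a + (n + 1 : ℤ) = a + n + 1 by ring]
      ring
  rw [ENNReal.tsum_prod', ENNReal.tsum_eq_iSup_sum]
  refine iSup_le fun s => ?_
  obtain ⟨a, ha⟩ := s.bddBelow
  obtain ⟨b, hb⟩ := s.bddAbove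
  have hs : s ⊆ Finset.Ico a (a + ((b + 1 - a).toNat : ℤ)) := by
    intro i hi
    have h1 := ha hi
    have h2 := hb hi
    simp only [Finset.mem_Ico]; omega
  exact (Finset.sum_le_sum_of_subset hs).trans
    ((le_self_add.trans (hIco a (b + 1 - a).toNat)).trans (hB a))

theorem tsum_level_le_of_step {v g : ℤ → ℤ → ℝ≥0∞}
    (hstep : ∀ j k, v (j + 1) (2 * k) + v (j + 1) (2 * k + 1) ≤ v j k + g j k) (a : ℤ) (n : ℕ) :
    ∑' k, v (a + n) k ≤ (∑' k, v a k) + ∑' p : ℤ × ℤ, g p.1 p.2 := by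
  have hsum : ∀ j, (∑' k, v (j + 1) k) ≤ (∑' k, v j k) + ∑' k, g j k := fun j => by
    rw [tsum_int_eq_tsum_even_add_odd (v (j + 1)), ← ENNReal.tsum_add]
    exact ENNReal.tsum_le_tsum (hstep j)
  have hIco : ∑' k, v (a + n) k
      ≤ (∑' k, v a k) + ∑ i ∈ Finset.Ico a (a + n), ∑' k, g i k := by
    induction n with
    | zero => simp
    | succ n ih =>
      have : Finset.Ico a (a + (n + 1 : ℕ)) = insert (a + n) (Finset.Ico a (a + n)) := by
        ext; simp; omega
      rw [this, Finset.sum_insert (by simp)]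
      push_cast
      rw [show a + (n + 1 : ℤ) = a + n + 1 by ring]
      refine ((hsum (a + n)).trans (add_le_add_left ih _)).trans (le_of_eq ?_)
      ring
  rw [ENNReal.tsum_prod']
  exact hIco.trans (add_le_add_right (ENNReal.sum_le_tsum _) _)

theorem volume_dyadInt (j k : ℤ) : volume (dyadInt j k) = ENNReal.ofReal ((2 : ℝ) ^ (-j)) := by
  rw [dyadInt, Real.volume_Ico]; congr 1; ring

theorem toReal_volume_dyadInt (j k : ℤ) : (volume (dyadInt j k)).toReal = (2 : ℝ) ^ (-j) := by
  rw [volume_dyadInt, ENNReal.toReal_ofReal (by positivity)]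

theorem measurableSet_dyadInt (j k : ℤ) : MeasurableSet (dyadInt j k) := measurableSet_Ico

theorem mem_dyadInt_iff {j k : ℤ} {x : ℝ} : x ∈ dyadInt j k ↔ ⌊x * (2 : ℝ) ^ j⌋ = k := by
  have h : (0 : ℝ) < 2 ^ j := by positivity
  rw [dyadInt, Set.mem_Ico, Int.floor_eq_iff, zpow_neg, ← div_eq_mul_inv, ← div_eq_mul_inv,
    div_le_iff₀ h, lt_div_iff₀ h]

theorem iUnion_dyadInt (j : ℤ) : ⋃ k, dyadInt j k = Set.univ :=
  Set.eq_univ_of_forall fun _ => Set.mem_iUnion.2 ⟨_, mem_dyadInt_iff.2 rfl⟩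

theorem pairwise_disjoint_dyadInt (j : ℤ) : Pairwise (Function.onFun Disjoint (dyadInt j)) := by
  intro k l hkl
  rw [Function.onFun, Set.disjoint_left]
  intro x hk hl
  exact hkl ((mem_dyadInt_iff.1 hk).symm.trans (mem_dyadInt_iff.1 hl))

theorem tsum_setLIntegral_dyadInt (j : ℤ) (g : ℝ → ℝ≥0∞) :
    ∑' k, ∫⁻ x in dyadInt j k, g x = ∫⁻ x, g x := by
  rw [← lintegral_iUnion (measurableSet_dyadInt j) (pairwise_disjoint_dyadInt j),
    iUnion_dyadInt, Measure.restrict_univ]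

theorem tsum_ofReal_two_zpow_mul (j : ℤ) (a : ℤ → ℝ) :
    ∑' k, ENNReal.ofReal ((2 : ℝ) ^ (-j) * a k)
      = ∫⁻ x, ENNReal.ofReal (a ⌊x * (2 : ℝ) ^ j⌋) := by
  rw [← tsum_setLIntegral_dyadInt j]
  congr 1; ext k
  rw [setLIntegral_congr_fun (g := fun _ => ENNReal.ofReal (a k)) (measurableSet_dyadInt j k),
    setLIntegral_const, volume_dyadInt, ENNReal.ofReal_mul (by positivity)]
  · exact mul_comm _ _
  · intro x hx
    simp only [mem_dyadInt_iff.1 hx]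

theorem dyadInt_eq_union (j k : ℤ) :
    dyadInt j k = dyadInt (j + 1) (2 * k + 1) ∪ dyadInt (j + 1) (2 * k) := by
  have h : (2 : ℝ) ^ (-j) = 2 * 2 ^ (-(j + 1)) := by
    rw [show -j = -(j + 1) + 1 by ring, zpow_add_one₀ two_ne_zero, mul_comm]
  have h0 : (0 : ℝ) < 2 ^ (-(j + 1)) := by positivity
  unfold dyadInt
  rw [h, Set.union_comm]
  push_cast
  rw [Set.Ico_union_Ico_eq_Ico (by nlinarith) (by nlinarith)]
  congr 1 <;> ring

theorem integrableOn_dyadInt {f : ℝ → ℝ} (hf : LocallyIntegrable f volume) (j k : ℤ) :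
    IntegrableOn f (dyadInt j k) :=
  (hf.integrableOn_isCompact isCompact_Icc).mono_set Set.Ico_subset_Icc_self

theorem iAvg_dyadInt (f : ℝ → ℝ) (j k : ℤ) :
    iAvg (dyadInt j k) f = (2 : ℝ) ^ j * ∫ x in dyadInt j k, f x := by
  rw [iAvg, toReal_volume_dyadInt, zpow_neg, inv_inv]

theorem setIntegral_dyadInt (f : ℝ → ℝ) (j k : ℤ) :
    ∫ x in dyadInt j k, f x = (2 : ℝ) ^ (-j) * iAvg (dyadInt j k) f := by
  rw [iAvg_dyadInt, ← mul_assoc, ← zpow_add₀ two_ne_zero]; simp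

theorem iAvg_dyadInt_eq {f : ℝ → ℝ} (hf : LocallyIntegrable f volume) (j k : ℤ) :
    iAvg (dyadInt j k) f
      = (iAvg (dyadInt (j + 1) (2 * k + 1)) f + iAvg (dyadInt (j + 1) (2 * k)) f) / 2 := by
  rw [iAvg_dyadInt, iAvg_dyadInt, iAvg_dyadInt, dyadInt_eq_union, setIntegral_union
    (pairwise_disjoint_dyadInt (j + 1) (by omega)) (measurableSet_dyadInt _ _)
    (integrableOn_dyadInt hf _ _) (integrableOn_dyadInt hf _ _), zpow_add_one₀ two_ne_zero]
  ring

theorem haarCoeff_sq {f : ℝ → ℝ} (hf : LocallyIntegrable f volume) (j k : ℤ) :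
    haarCoeff f j k ^ 2 = (2 : ℝ) ^ (-j) *
      ((iAvg (dyadInt (j + 1) (2 * k + 1)) f - iAvg (dyadInt (j + 1) (2 * k)) f) / 2) ^ 2 := by
  have h : haarCoeff f j k = (√((2 : ℝ) ^ (-j)))⁻¹ *
      ((∫ x in dyadInt (j + 1) (2 * k + 1), f x) - ∫ x in dyadInt (j + 1) (2 * k), f x) := by
    rw [← integral_indicator (measurableSet_dyadInt _ _),
      ← integral_indicator (measurableSet_dyadInt _ _), ← integral_sub, ← integral_const_mul]
    · unfold haarCoeff haarFn
      rw [toReal_volume_dyadInt]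
      congr 1; ext x
      simp only [Set.indicator]
      split_ifs <;> ring
    · exact (integrable_indicator_iff (measurableSet_dyadInt _ _)).2 (integrableOn_dyadInt hf _ _)
    · exact (integrable_indicator_iff (measurableSet_dyadInt _ _)).2 (integrableOn_dyadInt hf _ _)
  rw [h, setIntegral_dyadInt, setIntegral_dyadInt, mul_pow, inv_pow, Real.sq_sqrt (by positivity),
    show -(j + 1) = -j - 1 by ring, zpow_sub_one₀ two_ne_zero]
  have : (2 : ℝ) ^ (-j) ≠ 0 := by positivity
  field_simp

theorem iAvg_dyadInt_mono {f g : ℝ → ℝ} {j k : ℤ} (hf : IntegrableOn f (dyadInt j k))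
    (hg : IntegrableOn g (dyadInt j k)) (h : ∀ᵐ x, f x ≤ g x) :
    iAvg (dyadInt j k) f ≤ iAvg (dyadInt j k) g := by
  rw [iAvg_dyadInt, iAvg_dyadInt]
  exact mul_le_mul_of_nonneg_left (setIntegral_mono_ae hf hg h) (by positivity)

theorem iAvg_dyadInt_pos {w : ℝ → ℝ} (hw : LocallyIntegrable w volume) (hpos : ∀ᵐ x, 0 < w x)
    (j k : ℤ) : 0 < iAvg (dyadInt j k) w := by
  rw [iAvg_dyadInt]
  refine mul_pos (by positivity) ?_
  rw [integral_pos_iff_support_of_nonneg_ae (ae_restrict_of_ae (hpos.mono fun x hx => hx.le))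
    (integrableOn_dyadInt hw j k)]
  have : volume.restrict (dyadInt j k) (Function.support w)
      = volume.restrict (dyadInt j k) Set.univ := by
    apply measure_congr
    filter_upwards [ae_restrict_of_ae hpos] with x hx
    exact propext ⟨fun _ => trivial, fun _ => hx.ne'⟩
  rw [this, Measure.restrict_apply_univ, volume_dyadInt]
  simp; positivity

theorem iAvg_dyadInt_add {f g : ℝ → ℝ} {j k : ℤ} (hf : IntegrableOn f (dyadInt j k))
    (hg : IntegrableOn g (dyadInt j k)) :
    iAvg (dyadInt j k) (fun x => f x + g x) = iAvg (dyadInt j k) f + iAvg (dyadInt j k) g := by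
  rw [iAvg_dyadInt, iAvg_dyadInt, iAvg_dyadInt, integral_add hf hg, mul_add]

theorem iAvg_dyadInt_const_mul (c : ℝ) (f : ℝ → ℝ) (j k : ℤ) :
    iAvg (dyadInt j k) (fun x => c * f x) = c * iAvg (dyadInt j k) f := by
  rw [iAvg_dyadInt, iAvg_dyadInt, integral_const_mul]; ring

theorem iAvg_dyadInt_const (c : ℝ) (j k : ℤ) : iAvg (dyadInt j k) (fun _ => c) = c := by
  rw [iAvg, setIntegral_const, measureReal_def, toReal_volume_dyadInt, smul_eq_mul, ← mul_assoc,
    inv_mul_cancel₀ (by positivity), one_mul]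

/-- The Cauchy–Schwarz inequality for averages. -/
theorem iAvg_dyadInt_sq_le {f w : ℝ → ℝ} (hpos : ∀ᵐ x, 0 < w x)
    (hf : LocallyIntegrable f volume)
    (hfw : LocallyIntegrable (fun x => f x ^ 2 * w x) volume)
    (hσ : LocallyIntegrable (fun x => (w x)⁻¹) volume) (j k : ℤ) :
    iAvg (dyadInt j k) f ^ 2
      ≤ iAvg (dyadInt j k) (fun x => f x ^ 2 * w x) * iAvg (dyadInt j k) (fun x => (w x)⁻¹) := by
  have hy : 0 < iAvg (dyadInt j k) (fun x => (w x)⁻¹) :=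
    iAvg_dyadInt_pos hσ (hpos.mono fun x hx => inv_pos.2 hx) j k
  have key : ∀ c : ℝ, 2 * c * iAvg (dyadInt j k) f
      ≤ iAvg (dyadInt j k) (fun x => f x ^ 2 * w x)
        + c ^ 2 * iAvg (dyadInt j k) (fun x => (w x)⁻¹) := by
    intro c
    rw [← iAvg_dyadInt_const_mul, ← iAvg_dyadInt_const_mul, ← iAvg_dyadInt_add
      (integrableOn_dyadInt hfw j k) ((integrableOn_dyadInt hσ j k).const_mul _)]
    refine iAvg_dyadInt_mono ((integrableOn_dyadInt hf j k).const_mul _)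
      ((integrableOn_dyadInt hfw j k).add ((integrableOn_dyadInt hσ j k).const_mul _)) ?_
    filter_upwards [hpos] with x hx
    have : f x ^ 2 * w x + c ^ 2 * (w x)⁻¹ - 2 * c * f x = (f x * w x - c) ^ 2 * (w x)⁻¹ := by
      field_simp; ring
    have : 0 ≤ (f x * w x - c) ^ 2 * (w x)⁻¹ := by positivity
    linarith
  generalize iAvg (dyadInt j k) (fun x => (w x)⁻¹) = y at *
  generalize iAvg (dyadInt j k) (fun x => f x ^ 2 * w x) = F at *
  generalize iAvg (dyadInt j k) f = a at *
  have h := key (a / y)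
  have h1 : 2 * (a / y) * a - (a / y) ^ 2 * y = a ^ 2 / y := by field_simp; ring
  rw [← div_le_iff₀ hy]; linarith

theorem one_le_iAvg_mul_iAvg_inv {w : ℝ → ℝ} (hw : LocallyIntegrable w volume)
    (hpos : ∀ᵐ x, 0 < w x) (hσ : LocallyIntegrable (fun x => (w x)⁻¹) volume) (j k : ℤ) :
    1 ≤ iAvg (dyadInt j k) w * iAvg (dyadInt j k) (fun x => (w x)⁻¹) := by
  have := iAvg_dyadInt_sq_le (f := fun _ => (1 : ℝ)) hpos (locallyIntegrable_const 1)
    (by simpa using hw) hσ j k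
  simpa [iAvg_dyadInt_const] using this

theorem iAvg_dyadInt_eq_Ioo (f : ℝ → ℝ) (j k : ℤ) : iAvg (dyadInt j k) f
    = iAvg (Set.Ioo ((k : ℝ) * (2:ℝ) ^ (-j)) (((k : ℝ) + 1) * (2:ℝ) ^ (-j))) f := by
  unfold iAvg dyadInt
  rw [Real.volume_Ico, Real.volume_Ioo, integral_Ico_eq_integral_Ioo]

theorem iAvg_mul_iAvg_inv_le {w : ℝ → ℝ} (h : a2Const w < ⊤) (j k : ℤ) :
    iAvg (dyadInt j k) w * iAvg (dyadInt j k) (fun x => (w x)⁻¹) ≤ (a2Const w).toReal := by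
  rw [iAvg_dyadInt_eq_Ioo, iAvg_dyadInt_eq_Ioo]
  apply (ENNReal.ofReal_le_iff_le_toReal h.ne).1
  have h0 : (0 : ℝ) < 2 ^ (-j) := by positivity
  exact le_iSup (fun q : {q : ℝ × ℝ // q.1 < q.2} => ENNReal.ofReal
    (iAvg (Set.Ioo q.1.1 q.1.2) w * iAvg (Set.Ioo q.1.1 q.1.2) (fun x => (w x)⁻¹)))
    ⟨(_, _), by nlinarith⟩

theorem ofReal_two_zpow_mul_iAvg {h : ℝ → ℝ} (hh : Integrable h) (h0 : ∀ᵐ x, 0 ≤ h x) (j k : ℤ) :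
    ENNReal.ofReal ((2 : ℝ) ^ (-j) * iAvg (dyadInt j k) h)
      = ∫⁻ x in dyadInt j k, ENNReal.ofReal (h x) := by
  rw [← setIntegral_dyadInt, ofReal_integral_eq_lintegral_ofReal hh.integrableOn
    (ae_restrict_of_ae h0)]

theorem tsum_haarCoeff_sq_mul_iAvg_le {w f : ℝ → ℝ} {Q : ℝ} (hw : LocallyIntegrable w volume)
    (hpos : ∀ᵐ x, 0 < w x) (hσ : LocallyIntegrable (fun x => (w x)⁻¹) volume)
    (hQ : ∀ j k, iAvg (dyadInt j k) w * iAvg (dyadInt j k) (fun x => (w x)⁻¹) ≤ Q)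
    (hf : LocallyIntegrable f volume) (hfw : Integrable (fun x => f x ^ 2 * w x)) :
    ∑' p : ℤ × ℤ, ENNReal.ofReal (haarCoeff f p.1 p.2 ^ 2 * iAvg (dyadInt p.1 p.2) w)
      ≤ ENNReal.ofReal (2048 * Q ^ 2) * ∫⁻ x, ENNReal.ofReal (f x ^ 2 * w x) := by
  have hY := iAvg_dyadInt_pos hw hpos
  have hX := iAvg_dyadInt_pos hσ (hpos.mono fun x hx => inv_pos.2 hx)
  have h1 := one_le_iAvg_mul_iAvg_inv hw hpos hσ
  have hCS := iAvg_dyadInt_sq_le hpos hf hfw.locallyIntegrable hσ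
  have eY := iAvg_dyadInt_eq hw
  have eX := iAvg_dyadInt_eq hσ
  have eF := iAvg_dyadInt_eq hfw.locallyIntegrable
  have ef := iAvg_dyadInt_eq hf
  have hh0 : ∀ᵐ x, 0 ≤ f x ^ 2 * w x := hpos.mono fun x hx => by positivity
  have eint := ofReal_two_zpow_mul_iAvg hfw hh0
  simp only [haarCoeff_sq hf]
  generalize hy : (fun j k => iAvg (dyadInt j k) w) = y
  generalize hx : (fun j k => iAvg (dyadInt j k) (fun x => (w x)⁻¹)) = x
  generalize hF : (fun j k => iAvg (dyadInt j k) (fun x => f x ^ 2 * w x)) = F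
  generalize ha : (fun j k => iAvg (dyadInt j k) f) = a
  simp only [funext_iff] at hy hx hF ha
  simp only [hy, hx, hF, ha] at *
  have hQ1 : 1 ≤ Q := (h1 0 0).trans (hQ 0 0)
  have hxy : ∀ j k, 1 ≤ x j k * y j k := fun j k => by rw [mul_comm]; exact h1 j k
  have hxyQ : ∀ j k, x j k * y j k ≤ Q := fun j k => by rw [mul_comm]; exact hQ j k
  have hV1 : ∀ j k, a j k ^ 2 / x j k ≤ F j k := fun j k => by
    rw [div_le_iff₀ (hX j k)]; exact hCS j k
  have hV2 : ∀ j k, a j k ^ 2 / bellS Q (x j k) (y j k) ≤ F j k := fun j k =>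
    (div_le_div_of_nonneg_left (sq_nonneg _) (hX j k) (le_bellS (hY j k) (hxy j k))).trans
      (hV1 j k)
  have hV3 : ∀ j k, 0 ≤ a j k ^ 2 / x j k := fun j k => div_nonneg (sq_nonneg _) (hX j k).le
  have hV4 : ∀ j k, 0 ≤ a j k ^ 2 / bellS Q (x j k) (y j k) := fun j k =>
    div_nonneg (sq_nonneg _) ((hX j k).le.trans (le_bellS (hY j k) (hxy j k)))
  let V : ℤ → ℤ → ℝ := fun j k =>
    2 * F j k - (a j k ^ 2 / x j k + a j k ^ 2 / bellS Q (x j k) (y j k))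
  have hV0 : ∀ j k, 0 ≤ V j k := fun j k => by
    have := hV1 j k
    have := hV2 j k
    simp only [V]; linarith
  refine tsum_dyadic_le_of_step
    (v := fun j k => ENNReal.ofReal (1024 * Q ^ 2 * ((2 : ℝ) ^ (-j) * V j k)))
    (g := fun j k => ENNReal.ofReal ((2 : ℝ) ^ (-j) *
      ((a (j + 1) (2 * k + 1) - a (j + 1) (2 * k)) / 2) ^ 2 * y j k)) ?_ ?_
  · intro j k
    have hv : ∀ j k, 0 ≤ 1024 * Q ^ 2 * ((2 : ℝ) ^ (-j) * V j k) := fun j k => by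
      have := hV0 j k
      positivity
    have hyp := (hY j k).le
    rw [← ENNReal.ofReal_add (hv _ _) (hv _ _), ← ENNReal.ofReal_add
      (add_nonneg (hv _ _) (hv _ _)) (by positivity)]
    apply ENNReal.ofReal_le_ofReal
    have step := sq_div_bellS_step (Q := Q) (hX (j + 1) (2 * k + 1)) (hX (j + 1) (2 * k))
      (hY (j + 1) (2 * k + 1)) (hY (j + 1) (2 * k)) (hxy _ _) (hxy _ _)
      (by rw [← eX, ← eY]; exact hxy j k) (by rw [← eX, ← eY]; exact hxyQ j k)
      (a (j + 1) (2 * k + 1)) (a (j + 1) (2 * k))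
    rw [← eX, ← eY, ← ef] at step
    have hG : (2 * F (j + 1) (2 * k + 1) - V (j + 1) (2 * k + 1)
        + (2 * F (j + 1) (2 * k) - V (j + 1) (2 * k))) / 2 - (2 * F j k - V j k)
        = V j k - (V (j + 1) (2 * k + 1) + V (j + 1) (2 * k)) / 2 := by
      rw [eF j k]; ring
    have hG' : ((a (j + 1) (2 * k + 1) - a (j + 1) (2 * k)) / 2) ^ 2
        ≤ 1024 * Q * x j k * (V j k - (V (j + 1) (2 * k + 1) + V (j + 1) (2 * k)) / 2) := by
      rw [← hG]; simpa only [V, _root_.sub_sub_cancel] using step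
    have hhalf : (2 : ℝ) ^ (-j) = 2 * 2 ^ (-(j + 1)) := by
      rw [show -j = -(j + 1) + 1 by ring, zpow_add_one₀ two_ne_zero, mul_comm]
    have hx0 := hX j k
    have hQx := hxyQ j k
    clear_value V
    obtain ⟨G, hGd⟩ : ∃ G, G = V j k - (V (j + 1) (2 * k + 1) + V (j + 1) (2 * k)) / 2 := ⟨_, rfl⟩
    rw [← hGd] at hG'
    have hφ := sq_nonneg ((a (j + 1) (2 * k + 1) - a (j + 1) (2 * k)) / 2)
    generalize ((a (j + 1) (2 * k + 1) - a (j + 1) (2 * k)) / 2) ^ 2 = φ at hG' hφ ⊢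
    have hG0 : 0 ≤ G := nonneg_of_mul_nonneg_right (hφ.trans hG') (by positivity)
    have h3 : φ * y j k ≤ 1024 * Q ^ 2 * G := by
      calc φ * y j k ≤ 1024 * Q * x j k * G * y j k := by gcongr
        _ = 1024 * Q * G * (x j k * y j k) := by ring
        _ ≤ 1024 * Q * G * Q := by gcongr
        _ = _ := by ring
    have h4 := mul_le_mul_of_nonneg_left h3 (show (0 : ℝ) ≤ 2 ^ (-j) by positivity)
    rw [hGd] at h4
    rw [hhalf] at h4 ⊢
    linarith
  · intro j
    rw [← tsum_setLIntegral_dyadInt j, ← ENNReal.tsum_mul_left]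
    refine ENNReal.tsum_le_tsum fun k => ?_
    rw [← eint, ← ENNReal.ofReal_mul (by positivity)]
    apply ENNReal.ofReal_le_ofReal
    have h2 : (0 : ℝ) < 2 ^ (-j) := by positivity
    have : V j k ≤ 2 * F j k := by
      have := hV3 j k
      have := hV4 j k
      simp only [V]; linarith
    have : 1024 * Q ^ 2 * ((2 : ℝ) ^ (-j) * V j k)
      ≤ 1024 * Q ^ 2 * ((2 : ℝ) ^ (-j) * (2 * F j k)) := by gcongr
    linarith

theorem tsum_level_iAvg_sq_mul_le {w f : ℝ → ℝ} {Q : ℝ} (hw : LocallyIntegrable w volume)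
    (hpos : ∀ᵐ x, 0 < w x) (hσ : LocallyIntegrable (fun x => (w x)⁻¹) volume)
    (hQ : ∀ j k, iAvg (dyadInt j k) w * iAvg (dyadInt j k) (fun x => (w x)⁻¹) ≤ Q)
    (hf : LocallyIntegrable f volume) (hfw : Integrable (fun x => f x ^ 2 * w x)) (j : ℤ) :
    ∑' k, ENNReal.ofReal ((2 : ℝ) ^ (-j) * (iAvg (dyadInt j k) f ^ 2 * iAvg (dyadInt j k) w))
      ≤ ENNReal.ofReal (Q * ∫ x, f x ^ 2 * w x) := by
  have hh0 : ∀ᵐ x, 0 ≤ f x ^ 2 * w x := hpos.mono fun x hx => by positivity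
  have hQ0 : 0 ≤ Q := zero_le_one.trans ((one_le_iAvg_mul_iAvg_inv hw hpos hσ 0 0).trans (hQ 0 0))
  rw [ENNReal.ofReal_mul hQ0, ofReal_integral_eq_lintegral_ofReal hfw hh0,
    ← tsum_setLIntegral_dyadInt j, ← ENNReal.tsum_mul_left]
  refine ENNReal.tsum_le_tsum fun k => ?_
  rw [← ofReal_two_zpow_mul_iAvg hfw hh0, ← ENNReal.ofReal_mul hQ0]
  apply ENNReal.ofReal_le_ofReal
  have hx := iAvg_dyadInt_pos hw hpos j k
  have hCS := iAvg_dyadInt_sq_le hpos hf hfw.locallyIntegrable hσ j k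
  have hQ' := hQ j k
  have hF : 0 ≤ iAvg (dyadInt j k) (fun x => f x ^ 2 * w x) := by
    rw [iAvg_dyadInt]
    exact mul_nonneg (by positivity) (integral_nonneg_of_ae (ae_restrict_of_ae hh0))
  generalize iAvg (dyadInt j k) w = x at *
  generalize iAvg (dyadInt j k) (fun x => f x ^ 2 * w x) = F at *
  rw [show Q * ((2 : ℝ) ^ (-j) * F) = (2 : ℝ) ^ (-j) * (Q * F) by ring]
  refine mul_le_mul_of_nonneg_left ?_ (by positivity)
  nlinarith [mul_le_mul_of_nonneg_right hCS hx.le, mul_le_mul_of_nonneg_left hQ' hF]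

theorem two_pow_mul_iAvg_inv_growth {w : ℝ → ℝ} {Q : ℝ} (hw : LocallyIntegrable w volume)
    (hpos : ∀ᵐ x, 0 < w x) (hσ : LocallyIntegrable (fun x => (w x)⁻¹) volume)
    (hQ : ∀ j k, iAvg (dyadInt j k) w * iAvg (dyadInt j k) (fun x => (w x)⁻¹) ≤ Q)
    {c : ℤ} (hc : c = 0 ∨ c = -1) :
    Filter.Tendsto (fun n : ℕ => (2 : ℝ) ^ (n : ℤ) *
      iAvg (dyadInt (-n) c) (fun x => (w x)⁻¹)) Filter.atTop Filter.atTop := by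
  have hX := iAvg_dyadInt_pos hw hpos
  have hY := iAvg_dyadInt_pos hσ (hpos.mono fun x hx => inv_pos.2 hx)
  have h1 := one_le_iAvg_mul_iAvg_inv hw hpos hσ
  have eX := iAvg_dyadInt_eq hw
  have eY := iAvg_dyadInt_eq hσ
  have hQ1 : 1 ≤ Q := (h1 0 0).trans (hQ 0 0)
  have key : ∀ x₁ x₂ y₁ y₂ : ℝ, 0 < x₁ → 0 < x₂ → 0 < y₁ → 0 < y₂ → 1 ≤ x₂ * y₂ →
      (x₁ + x₂) / 2 * ((y₁ + y₂) / 2) ≤ Q → y₁ + 2 * ((y₁ + y₂) / 2) / (4 * Q)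
        ≤ 2 * ((y₁ + y₂) / 2) := by
    intro x₁ x₂ y₁ y₂ hx₁ hx₂ hy₁ hy₂ h2 hq
    have : 2 * ((y₁ + y₂) / 2) / (4 * Q) ≤ y₂ := by
      rw [div_le_iff₀ (by positivity)]
      have a1 : (y₁ + y₂) * 1 ≤ (y₁ + y₂) * (x₂ * y₂) := by gcongr
      have a2 : (y₁ + y₂) * (x₁ + x₂) * y₂ ≤ 4 * Q * y₂ :=
        mul_le_mul_of_nonneg_right (by nlinarith) hy₂.le
      nlinarith [mul_pos (mul_pos (add_pos hy₁ hy₂) hx₁) hy₂]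
    linarith
  generalize hx : (fun j k => iAvg (dyadInt j k) w) = x at *
  generalize hy : (fun j k => iAvg (dyadInt j k) (fun x => (w x)⁻¹)) = y at *
  simp only [funext_iff] at hy hx
  simp only [hx, hy] at *
  have step : ∀ n : ℕ, (2 : ℝ) ^ (n : ℤ) * y (-n) c
      + (2 : ℝ) ^ ((n + 1 : ℕ) : ℤ) * y (-(n + 1 : ℕ)) c / (4 * Q)
      ≤ (2 : ℝ) ^ ((n + 1 : ℕ) : ℤ) * y (-(n + 1 : ℕ)) c := by
    intro n
    have hp : (2 : ℝ) ^ ((n + 1 : ℕ) : ℤ) = 2 ^ (n : ℤ) * 2 := by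
      push_cast; rw [zpow_add_one₀ two_ne_zero]
    have hj : -((n + 1 : ℕ) : ℤ) + 1 = -n := by push_cast; ring
    have hk : y (-n) c + 2 * y (-(n + 1 : ℕ)) c / (4 * Q) ≤ 2 * y (-(n + 1 : ℕ)) c := by
      have hq := hQ (-(n + 1 : ℕ)) c
      rw [eX (-(n + 1 : ℕ)) c, eY (-(n + 1 : ℕ)) c, hj] at hq
      rw [eY (-(n + 1 : ℕ)) c, hj]
      rcases hc with rfl | rfl
      · simp only [mul_zero, zero_add] at hq ⊢
        have := key (x (-n) 0) (x (-n) 1) (y (-n) 0) (y (-n) 1) (hX _ _) (hX _ _) (hY _ _) (hY _ _)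
          (h1 _ _) (by rwa [add_comm (x (-n) 0), add_comm (y (-n) 0)])
        rwa [add_comm (y (-n) 0) (y (-n) 1)] at this
      · norm_num at hq ⊢
        exact key (x (-n) (-1)) (x (-n) (-2)) (y (-n) (-1)) (y (-n) (-2)) (hX _ _) (hX _ _) (hY _ _)
          (hY _ _) (h1 _ _) hq
    rw [hp]
    have h2 : (0 : ℝ) < 2 ^ (n : ℤ) := by positivity
    calc (2 : ℝ) ^ (n : ℤ) * y (-n) c + 2 ^ (n : ℤ) * 2 * y (-(n + 1 : ℕ)) c / (4 * Q)
        = 2 ^ (n : ℤ) * (y (-n) c + 2 * y (-(n + 1 : ℕ)) c / (4 * Q)) := by ring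
      _ ≤ 2 ^ (n : ℤ) * (2 * y (-(n + 1 : ℕ)) c) := by gcongr
      _ = _ := by ring
  have hY0 := hY 0 c
  have lower : ∀ n : ℕ, y 0 c + n * (y 0 c / (4 * Q)) ≤ (2 : ℝ) ^ (n : ℤ) * y (-n) c := by
    intro n
    induction n with
    | zero => simp
    | succ n ih =>
      have hs := step n
      have hm : y 0 c ≤ (2 : ℝ) ^ ((n + 1 : ℕ) : ℤ) * y (-(n + 1 : ℕ)) c := by
        have b1 : 0 ≤ (2 : ℝ) ^ ((n + 1 : ℕ) : ℤ) * y (-(n + 1 : ℕ)) c / (4 * Q) := by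
          have := (hY (-(n + 1 : ℕ)) c).le
          positivity
        have b2 : 0 ≤ n * (y 0 c / (4 * Q)) := by positivity
        linarith
      have hd : y 0 c / (4 * Q)
        ≤ (2 : ℝ) ^ ((n + 1 : ℕ) : ℤ) * y (-(n + 1 : ℕ)) c / (4 * Q) := by gcongr
      push_cast at *
      linarith
  refine Filter.tendsto_atTop_mono lower (Filter.tendsto_atTop_add_const_left _ _ ?_)
  exact tendsto_natCast_atTop_atTop.atTop_mul_const (by positivity)

theorem tsum_level_iAvg_sq_mul_iAvg_le {w f : ℝ → ℝ} {Q : ℝ} (hw : LocallyIntegrable w volume)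
    (hpos : ∀ᵐ x, 0 < w x) (hσ : LocallyIntegrable (fun x => (w x)⁻¹) volume)
    (hQ : ∀ j k, iAvg (dyadInt j k) w * iAvg (dyadInt j k) (fun x => (w x)⁻¹) ≤ Q)
    (hf : LocallyIntegrable f volume) (j : ℤ) (n : ℕ) :
    ∑' k, ENNReal.ofReal ((2 : ℝ) ^ (-(j + n)) *
        (iAvg (dyadInt (j + n) k) f ^ 2 * iAvg (dyadInt (j + n) k) w))
      ≤ 4 * (∑' k, ENNReal.ofReal ((2 : ℝ) ^ (-j) *
          (iAvg (dyadInt j k) f ^ 2 * iAvg (dyadInt j k) w)))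
        + ENNReal.ofReal (1004 * Q) * ∑' p : ℤ × ℤ,
          ENNReal.ofReal (haarCoeff f p.1 p.2 ^ 2 * iAvg (dyadInt p.1 p.2) w) := by
  have hX := iAvg_dyadInt_pos hw hpos
  have hY := iAvg_dyadInt_pos hσ (hpos.mono fun x hx => inv_pos.2 hx)
  have hxy := one_le_iAvg_mul_iAvg_inv hw hpos hσ
  have eX := iAvg_dyadInt_eq hw
  have eY := iAvg_dyadInt_eq hσ
  have ef := iAvg_dyadInt_eq hf
  simp only [haarCoeff_sq hf]
  generalize hx : (fun j k => iAvg (dyadInt j k) w) = x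
  generalize hy : (fun j k => iAvg (dyadInt j k) (fun x => (w x)⁻¹)) = y
  generalize ha : (fun j k => iAvg (dyadInt j k) f) = a
  simp only [funext_iff] at hy hx ha
  simp only [hy, hx, ha] at *
  have hQ1 : 1 ≤ Q := (hxy 0 0).trans (hQ 0 0)
  have hs0 : ∀ j k, 0 ≤ bellS Q (x j k) (y j k) := fun j k =>
    (hX j k).le.trans (le_bellS (hY j k) (hxy j k))
  have hv : ∀ j k, 0 ≤ (2 : ℝ) ^ (-j) * (a j k ^ 2 * bellS Q (x j k) (y j k)) := fun j k => by
    have := hs0 j k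
    positivity
  have hstep := tsum_level_le_of_step
    (v := fun j k => ENNReal.ofReal ((2 : ℝ) ^ (-j) * (a j k ^ 2 * bellS Q (x j k) (y j k))))
    (g := fun j k => ENNReal.ofReal (1004 * Q) * ENNReal.ofReal ((2 : ℝ) ^ (-j) *
      ((a (j + 1) (2 * k + 1) - a (j + 1) (2 * k)) / 2) ^ 2 * x j k)) ?_ j n
  · rw [ENNReal.tsum_mul_left] at hstep
    refine le_trans (ENNReal.tsum_le_tsum fun k => ?_) (hstep.trans ?_)
    · apply ENNReal.ofReal_le_ofReal
      gcongr
      exact le_bellS (hY _ _) (hxy _ _)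
    · gcongr
      rw [← ENNReal.tsum_mul_left]
      refine ENNReal.tsum_le_tsum fun k => ?_
      rw [show (4 : ℝ≥0∞) = ENNReal.ofReal 4 by simp, ← ENNReal.ofReal_mul (by norm_num)]
      apply ENNReal.ofReal_le_ofReal
      calc (2 : ℝ) ^ (-j) * (a j k ^ 2 * bellS Q (x j k) (y j k))
          ≤ (2 : ℝ) ^ (-j) * (a j k ^ 2 * (4 * x j k)) := by
            gcongr
            exact bellS_le (hX _ _) (hY _ _) (hxy _ _) (hQ _ _)
        _ = _ := by ring
  · intro j k
    have hx0 := (hX j k).le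
    rw [← ENNReal.ofReal_mul (by positivity), ← ENNReal.ofReal_add (hv _ _) (hv _ _),
      ← ENNReal.ofReal_add (hv _ _) (by positivity)]
    apply ENNReal.ofReal_le_ofReal
    have step := sq_mul_bellS_step (Q := Q) (hX (j + 1) (2 * k + 1)) (hX (j + 1) (2 * k))
      (hY (j + 1) (2 * k + 1)) (hY (j + 1) (2 * k)) (hxy _ _) (hxy _ _)
      (by rw [← eX, ← eY]; exact hxy j k) (by rw [← eX, ← eY]; exact hQ j k)
      (a (j + 1) (2 * k + 1)) (a (j + 1) (2 * k))
    rw [← eX, ← eY, ← ef] at step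
    have hhalf : (2 : ℝ) ^ (-j) = 2 * 2 ^ (-(j + 1)) := by
      rw [show -j = -(j + 1) + 1 by ring, zpow_add_one₀ two_ne_zero, mul_comm]
    have h4 := mul_le_mul_of_nonneg_left step (show (0 : ℝ) ≤ 2 ^ (-j) by positivity)
    rw [hhalf] at h4 ⊢
    linarith

theorem ae_tendsto_iAvg_dyadInt {f : ℝ → ℝ} (hf : LocallyIntegrable f volume) :
    ∀ᵐ x, Filter.Tendsto (fun n : ℕ => iAvg (dyadInt n ⌊x * (2 : ℝ) ^ (n : ℤ)⌋) f) Filter.atTop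
      (nhds (f x)) := by
  filter_upwards [IsUnifLocDoublingMeasure.ae_tendsto_average volume hf 1] with x hx
  have hδ : Filter.Tendsto (fun n : ℕ => (2 : ℝ) ^ (-(n : ℤ)) / 2) Filter.atTop
      (nhdsWithin 0 (Set.Ioi 0)) := by
    apply tendsto_nhdsWithin_iff.2 ⟨?_, Filter.Eventually.of_forall fun n => ?_⟩
    · have := (tendsto_pow_atTop_nhds_zero_of_lt_one (r := (1 / 2 : ℝ)) (by norm_num)
        (by norm_num)).div_const 2
      simpa [zpow_neg] using this
    · simp only [Set.mem_Ioi]; positivity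
  have hball : ∀ n : ℕ, Metric.closedBall
      (((⌊x * (2 : ℝ) ^ (n : ℤ)⌋ : ℝ) + 1 / 2) * (2 : ℝ) ^ (-(n : ℤ))) ((2 : ℝ) ^ (-(n : ℤ)) / 2)
      = Set.Icc ((⌊x * (2 : ℝ) ^ (n : ℤ)⌋ : ℝ) * (2 : ℝ) ^ (-(n : ℤ)))
        (((⌊x * (2 : ℝ) ^ (n : ℤ)⌋ : ℝ) + 1) * (2 : ℝ) ^ (-(n : ℤ))) := fun n => by
    rw [Real.closedBall_eq_Icc]
    congr 1 <;> ring
  have := hx (l := Filter.atTop)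
    (fun n : ℕ => ((⌊x * (2 : ℝ) ^ (n : ℤ)⌋ : ℝ) + 1 / 2) * (2 : ℝ) ^ (-(n : ℤ)))
    (fun n : ℕ => (2 : ℝ) ^ (-(n : ℤ)) / 2) hδ
    (Filter.Eventually.of_forall fun n => by
      rw [one_mul, hball]
      exact Set.Ico_subset_Icc_self (mem_dyadInt_iff.2 rfl))
  refine this.congr fun n => ?_
  rw [hball, setAverage_eq, measureReal_def, iAvg, dyadInt, integral_Icc_eq_integral_Ico,
    Real.volume_Icc, Real.volume_Ico, smul_eq_mul]

theorem lintegral_sq_mul_le_of_level_le {w f : ℝ → ℝ} {B : ℝ≥0∞}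
    (hw : LocallyIntegrable w volume) (hf : LocallyIntegrable f volume)
    (hB : ∀ n : ℕ, ∑' k, ENNReal.ofReal ((2 : ℝ) ^ (-(n : ℤ)) *
      (iAvg (dyadInt n k) f ^ 2 * iAvg (dyadInt n k) w)) ≤ B) :
    ∫⁻ x, ENNReal.ofReal (f x ^ 2 * w x) ≤ B := by
  let F : ℕ → ℝ → ℝ≥0∞ := fun n x => ENNReal.ofReal
    (iAvg (dyadInt n ⌊x * (2 : ℝ) ^ (n : ℤ)⌋) f ^ 2 * iAvg (dyadInt n ⌊x * (2 : ℝ) ^ (n : ℤ)⌋) w)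
  have hF : ∀ n, ∫⁻ x, F n x ≤ B := fun n => by
    have := hB n
    rwa [tsum_ofReal_two_zpow_mul n
      (fun k => iAvg (dyadInt n k) f ^ 2 * iAvg (dyadInt n k) w)] at this
  have hmeas : ∀ n, Measurable (F n) := fun n =>
    (measurable_of_countable (fun k : ℤ => ENNReal.ofReal
      (iAvg (dyadInt n k) f ^ 2 * iAvg (dyadInt n k) w))).comp
      (Int.measurable_floor.comp (measurable_id.mul_const _))
  have hlim : ∀ᵐ x, ENNReal.ofReal (f x ^ 2 * w x)
      = Filter.liminf (fun n => F n x) Filter.atTop := by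
    filter_upwards [ae_tendsto_iAvg_dyadInt hf, ae_tendsto_iAvg_dyadInt hw] with x h1 h2
    exact (ENNReal.tendsto_ofReal ((h1.pow 2).mul h2)).liminf_eq.symm
  rw [lintegral_congr_ae hlim]
  refine (lintegral_liminf_le hmeas).trans ?_
  exact (Filter.liminf_le_liminf (Filter.Eventually.of_forall hF)).trans (by simp)

theorem iAvg_dyadInt_eq_zero_of_support {f : ℝ → ℝ} {m N : ℕ} (hmN : m ≤ N)
    (hf : ∀ x ∉ Set.Ico (-(2 : ℝ) ^ m) (2 ^ m), f x = 0) {k : ℤ} (h0 : k ≠ 0) (h1 : k ≠ -1) :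
    iAvg (dyadInt (-N) k) f = 0 := by
  rw [iAvg, setIntegral_eq_zero_of_forall_eq_zero, mul_zero]
  intro x hx
  apply hf
  rintro ⟨hl, hr⟩
  rw [dyadInt, neg_neg, zpow_natCast] at hx
  obtain ⟨hxl, hxr⟩ := hx
  have hp : (2 : ℝ) ^ m ≤ 2 ^ N := pow_le_pow_right₀ one_le_two hmN
  have hN : (0 : ℝ) < 2 ^ N := by positivity
  rcases lt_or_ge k 0 with hk | hk
  · have : (k : ℝ) + 1 ≤ -1 := by exact_mod_cast (by omega : k + 1 ≤ -1)
    nlinarith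
  · have : (1 : ℝ) ≤ k := by exact_mod_cast (by omega : 1 ≤ k)
    nlinarith

/-- At coarse scales the weighted energy of the averages of a compactly supported function is
arbitrarily small. -/
theorem tendsto_tsum_level_of_support {w f : ℝ → ℝ} {Q : ℝ} (hw : LocallyIntegrable w volume)
    (hpos : ∀ᵐ x, 0 < w x) (hσ : LocallyIntegrable (fun x => (w x)⁻¹) volume)
    (hQ : ∀ j k, iAvg (dyadInt j k) w * iAvg (dyadInt j k) (fun x => (w x)⁻¹) ≤ Q)
    (hf : Integrable f) {m : ℕ} (hsupp : ∀ x ∉ Set.Ico (-(2 : ℝ) ^ m) (2 ^ m), f x = 0) :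
    Filter.Tendsto (fun N : ℕ => ∑' k, ENNReal.ofReal ((2 : ℝ) ^ (N : ℤ) *
      (iAvg (dyadInt (-N) k) f ^ 2 * iAvg (dyadInt (-N) k) w))) Filter.atTop (nhds 0) := by
  have hX := iAvg_dyadInt_pos hw hpos
  have hY := iAvg_dyadInt_pos hσ (hpos.mono fun x hx => inv_pos.2 hx)
  let G : ℤ → ℕ → ℝ := fun c N => (∫ x, |f x|) ^ 2 * Q /
    ((2 : ℝ) ^ (N : ℤ) * iAvg (dyadInt (-N) c) (fun x => (w x)⁻¹))
  have hG : ∀ c : ℤ, c = 0 ∨ c = -1 → Filter.Tendsto (fun N => ENNReal.ofReal (G c N))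
      Filter.atTop (nhds 0) := fun c hc => by
    have := (two_pow_mul_iAvg_inv_growth hw hpos hσ hQ hc).const_div_atTop
      ((∫ x, |f x|) ^ 2 * Q)
    simpa [G] using ENNReal.tendsto_ofReal this
  have hle : ∀ N : ℕ, ∀ c : ℤ, (2 : ℝ) ^ (N : ℤ) *
      (iAvg (dyadInt (-N) c) f ^ 2 * iAvg (dyadInt (-N) c) w) ≤ G c N := fun N c => by
    have hy := hY (-N) c
    have hx := hX (-N) c
    have hq := hQ (-N) c
    have h2 : (0 : ℝ) < 2 ^ (N : ℤ) := by positivity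
    have hint : (∫ x in dyadInt (-N) c, f x) ^ 2 ≤ (∫ x, |f x|) ^ 2 := by
      rw [sq_le_sq]
      refine le_trans (abs_integral_le_integral_abs.trans ?_) (le_abs_self _)
      exact setIntegral_le_integral hf.abs (Filter.Eventually.of_forall fun x => abs_nonneg _)
    rw [iAvg_dyadInt f, zpow_neg]
    simp only [G]
    rw [le_div_iff₀ (by positivity)]
    generalize (∫ x in dyadInt (-N) c, f x) = b at *
    generalize iAvg (dyadInt (-N) c) w = x at *
    generalize iAvg (dyadInt (-N) c) (fun x => (w x)⁻¹) = y at *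
    generalize (2 : ℝ) ^ (N : ℤ) = t at *
    calc t * ((t⁻¹ * b) ^ 2 * x) * (t * y) = b ^ 2 * (x * y) := by field_simp
      _ ≤ (∫ x, |f x|) ^ 2 * Q := by gcongr
  refine tendsto_of_tendsto_of_tendsto_of_le_of_le' tendsto_const_nhds
    (by simpa using (hG 0 (Or.inl rfl)).add (hG (-1) (Or.inr rfl)))
    (Filter.Eventually.of_forall fun _ => zero_le) ?_
  filter_upwards [Filter.eventually_ge_atTop m] with N hN
  rw [tsum_eq_sum (s := ({0, -1} : Finset ℤ)), Finset.sum_pair (by norm_num)]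
  · exact add_le_add (ENNReal.ofReal_le_ofReal (hle N 0)) (ENNReal.ofReal_le_ofReal (hle N (-1)))
  · intro k hk
    simp only [Finset.mem_insert, Finset.mem_singleton, not_or] at hk
    simp [iAvg_dyadInt_eq_zero_of_support hN hsupp hk.1 hk.2]

theorem exists_setIntegral_compl_Ico_lt {h : ℝ → ℝ} (hh : Integrable h) {ε : ℝ} (hε : 0 < ε) :
    ∃ m : ℕ, ∫ x in (Set.Ico (-(2 : ℝ) ^ m) (2 ^ m))ᶜ, h x < ε := by
  have hlim := tendsto_setIntegral_of_antitone (μ := volume) (f := h)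
    (s := fun m : ℕ => (Set.Ico (-(2 : ℝ) ^ m) (2 ^ m))ᶜ) (fun _ => measurableSet_Ico.compl)
    (fun m n hmn => by
      have : (2 : ℝ) ^ m ≤ 2 ^ n := pow_le_pow_right₀ one_le_two hmn
      exact Set.compl_subset_compl.2 (Set.Ico_subset_Ico (neg_le_neg this) this))
    ⟨0, hh.integrableOn⟩
  have hempty : ⋂ m : ℕ, (Set.Ico (-(2 : ℝ) ^ m) (2 ^ m))ᶜ = ∅ := by
    rw [← Set.compl_iUnion, Set.compl_empty_iff, Set.eq_univ_iff_forall]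
    intro x
    obtain ⟨m, hm⟩ := pow_unbounded_of_one_lt |x| one_lt_two
    exact Set.mem_iUnion.2 ⟨m, (abs_lt.1 hm).1.le, (abs_lt.1 hm).2⟩
  rw [hempty, setIntegral_empty] at hlim
  exact (hlim.eventually_lt_const hε).exists

theorem exists_tsum_level_le {w f : ℝ → ℝ} {Q : ℝ} (hw : LocallyIntegrable w volume)
    (hpos : ∀ᵐ x, 0 < w x) (hσ : LocallyIntegrable (fun x => (w x)⁻¹) volume)
    (hQ : ∀ j k, iAvg (dyadInt j k) w * iAvg (dyadInt j k) (fun x => (w x)⁻¹) ≤ Q)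
    (hf : LocallyIntegrable f volume) (hfw : Integrable (fun x => f x ^ 2 * w x)) {ε : ℝ}
    (hε : 0 < ε) :
    ∃ N : ℕ, ∑' k, ENNReal.ofReal ((2 : ℝ) ^ (N : ℤ) *
      (iAvg (dyadInt (-N) k) f ^ 2 * iAvg (dyadInt (-N) k) w)) ≤ ENNReal.ofReal ε := by
  have hX := iAvg_dyadInt_pos hw hpos
  have hQ0 : 0 < Q := one_pos.trans_le ((one_le_iAvg_mul_iAvg_inv hw hpos hσ 0 0).trans (hQ 0 0))
  obtain ⟨m, hm⟩ := exists_setIntegral_compl_Ico_lt hfw (show 0 < ε / (4 * Q) by positivity)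
  set K : Set ℝ := Set.Ico (-(2 : ℝ) ^ m) (2 ^ m) with hK
  have hKm : MeasurableSet K := measurableSet_Ico
  have hf₁ : Integrable (K.indicator f) :=
    (integrable_indicator_iff hKm).2
      ((hf.integrableOn_isCompact isCompact_Icc).mono_set Set.Ico_subset_Icc_self)
  have hf₂ : LocallyIntegrable (Kᶜ.indicator f) volume := by
    have : Kᶜ.indicator f = f - K.indicator f := by
      rw [← Set.indicator_compl]
    rw [this]
    exact hf.sub hf₁.locallyIntegrable
  have hind : (fun x => Kᶜ.indicator f x ^ 2 * w x) = Kᶜ.indicator (fun x => f x ^ 2 * w x) := by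
    ext x
    by_cases hx : x ∈ Kᶜ <;> simp [hx]
  have hf₂w : Integrable (fun x => Kᶜ.indicator f x ^ 2 * w x) := by
    rw [hind]; exact hfw.indicator hKm.compl
  have hlim := tendsto_tsum_level_of_support hw hpos hσ hQ hf₁ (m := m)
    (fun x hx => Set.indicator_of_notMem hx f)
  obtain ⟨N, hN⟩ := (hlim.eventually_le_const
    (show (0 : ℝ≥0∞) < ENNReal.ofReal (ε / 4) by simpa using hε)).exists
  have htail := tsum_level_iAvg_sq_mul_le hw hpos hσ hQ hf₂ hf₂w (-N)
  rw [hind, integral_indicator hKm.compl, neg_neg] at htail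
  have htail' := htail.trans (ENNReal.ofReal_le_ofReal
    (show Q * ∫ x in Kᶜ, f x ^ 2 * w x ≤ ε / 4 by
      calc Q * ∫ x in Kᶜ, f x ^ 2 * w x ≤ Q * (ε / (4 * Q)) := by gcongr
        _ = ε / 4 := by field_simp))
  refine ⟨N, ?_⟩
  calc ∑' k, ENNReal.ofReal ((2 : ℝ) ^ (N : ℤ) *
        (iAvg (dyadInt (-N) k) f ^ 2 * iAvg (dyadInt (-N) k) w))
      ≤ ∑' k, (2 * ENNReal.ofReal ((2 : ℝ) ^ (N : ℤ) *
          (iAvg (dyadInt (-N) k) (K.indicator f) ^ 2 * iAvg (dyadInt (-N) k) w))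
        + 2 * ENNReal.ofReal ((2 : ℝ) ^ (N : ℤ) *
          (iAvg (dyadInt (-N) k) (Kᶜ.indicator f) ^ 2 * iAvg (dyadInt (-N) k) w))) := by
        refine ENNReal.tsum_le_tsum fun k => ?_
        have hsum : iAvg (dyadInt (-N) k) f = iAvg (dyadInt (-N) k) (K.indicator f)
            + iAvg (dyadInt (-N) k) (Kᶜ.indicator f) := by
          rw [← iAvg_dyadInt_add hf₁.integrableOn (integrableOn_dyadInt hf₂ _ _)]
          congr 1
          exact (Set.indicator_self_add_compl K f).symm
        have hx := (hX (-N) k).le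
        rw [hsum, show (2 : ℝ≥0∞) = ENNReal.ofReal 2 by simp,
          ← ENNReal.ofReal_mul zero_le_two, ← ENNReal.ofReal_mul zero_le_two,
          ← ENNReal.ofReal_add (by positivity) (by positivity)]
        apply ENNReal.ofReal_le_ofReal
        have := mul_nonneg (mul_nonneg (show (0 : ℝ) ≤ 2 ^ (N : ℤ) by positivity) hx)
          (sq_nonneg (iAvg (dyadInt (-N) k) (K.indicator f)
            - iAvg (dyadInt (-N) k) (Kᶜ.indicator f)))
        linarith
    _ ≤ 2 * ENNReal.ofReal (ε / 4) + 2 * ENNReal.ofReal (ε / 4) := by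
        rw [ENNReal.tsum_add, ENNReal.tsum_mul_left, ENNReal.tsum_mul_left]
        gcongr
    _ = ENNReal.ofReal ε := by
        rw [show (2 : ℝ≥0∞) = ENNReal.ofReal 2 by simp, ← ENNReal.ofReal_mul zero_le_two,
          ← ENNReal.ofReal_add (by positivity) (by positivity)]
        congr 1; ring

theorem lintegral_sq_mul_le_tsum_haarCoeff {w f : ℝ → ℝ} {Q : ℝ}
    (hw : LocallyIntegrable w volume) (hpos : ∀ᵐ x, 0 < w x)
    (hσ : LocallyIntegrable (fun x => (w x)⁻¹) volume)
    (hQ : ∀ j k, iAvg (dyadInt j k) w * iAvg (dyadInt j k) (fun x => (w x)⁻¹) ≤ Q)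
    (hf : LocallyIntegrable f volume) (hfw : Integrable (fun x => f x ^ 2 * w x)) :
    ∫⁻ x, ENNReal.ofReal (f x ^ 2 * w x) ≤ ENNReal.ofReal (1004 * Q) * ∑' p : ℤ × ℤ,
      ENNReal.ofReal (haarCoeff f p.1 p.2 ^ 2 * iAvg (dyadInt p.1 p.2) w) := by
  refine ENNReal.le_of_forall_pos_le_add fun ε hε _ => ?_
  obtain ⟨N, hN⟩ := exists_tsum_level_le hw hpos hσ hQ hf hfw (show (0 : ℝ) < ε / 4 by positivity)
  refine lintegral_sq_mul_le_of_level_le hw hf fun n => ?_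
  have := tsum_level_iAvg_sq_mul_iAvg_le hw hpos hσ hQ hf (-N) (N + n)
  rw [show (-(N : ℤ) + ((N + n : ℕ) : ℤ)) = n by push_cast; ring, neg_neg] at this
  refine this.trans ?_
  rw [add_comm]
  gcongr
  calc _ ≤ 4 * ENNReal.ofReal (ε / 4) := by gcongr
    _ = ε := by
      rw [show (4 : ℝ≥0∞) = ENNReal.ofReal 4 by simp, ← ENNReal.ofReal_mul (by norm_num),
        mul_div_cancel₀ _ (by norm_num), ENNReal.ofReal_coe_nnreal]

theorem wNorm_two_eq {w f : ℝ → ℝ} :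
    wNorm 2 w f = (∫⁻ x, ENNReal.ofReal (f x ^ 2 * w x)) ^ (1 / 2 : ℝ) := by
  unfold wNorm
  congr 2; ext x
  rw [ENNReal.ofReal_rpow_of_nonneg (abs_nonneg _) zero_le_two, Real.rpow_two, sq_abs,
    ENNReal.ofReal_mul (sq_nonneg _)]

theorem integrable_sq_mul_of_wNorm_lt_top {w f : ℝ → ℝ} (hw : LocallyIntegrable w volume)
    (hpos : ∀ᵐ x, 0 < w x) (hf : Measurable f) (h : wNorm 2 w f < ⊤) :
    Integrable (fun x => f x ^ 2 * w x) := by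
  rw [wNorm_two_eq, ENNReal.rpow_lt_top_iff_of_pos (by norm_num)] at h
  refine ⟨(hf.pow_const 2).aestronglyMeasurable.mul hw.aestronglyMeasurable, ?_⟩
  rwa [hasFiniteIntegral_iff_ofReal (hpos.mono fun x hx => by positivity)]

theorem locallyIntegrable_of_integrable_sq_mul {w f : ℝ → ℝ} (hpos : ∀ᵐ x, 0 < w x)
    (hσ : LocallyIntegrable (fun x => (w x)⁻¹) volume) (hf : Measurable f)
    (hfw : Integrable (fun x => f x ^ 2 * w x)) : LocallyIntegrable f volume := by
  refine (hfw.locallyIntegrable.add hσ).mono hf.aestronglyMeasurable (hpos.mono fun x hx => ?_)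
  have hs : 0 ≤ f x ^ 2 * w x + (w x)⁻¹ := by positivity
  simp only [Pi.add_apply, Real.norm_eq_abs, abs_of_nonneg hs]
  have h1 : 0 ≤ (w x)⁻¹ := by positivity
  have h2 := mul_nonneg h1 (sq_nonneg (|f x| * w x - 1))
  have h3 : (w x)⁻¹ * (|f x| * w x - 1) ^ 2 = f x ^ 2 * w x - 2 * |f x| + (w x)⁻¹ := by
    rw [← sq_abs (f x)]; field_simp; ring
  have := abs_nonneg (f x)
  linarith

/-- **sharp weighted `L²` bounds for the dyadic square function;
Hukovic–Treil–Volberg, Petermichl–Pott.** There are absolute constants `c, C > 0` with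
`c [w]_{A₂}^{-1/2} ‖f‖_{L²(w)} ≤ (∑_{I∈D} |⟨f,h_I⟩|² ⟨w⟩_I)^{1/2} ≤ C [w]_{A₂} ‖f‖_{L²(w)}`
for every `w ∈ A₂` and `f ∈ L²(w)`. -/
theorem dyadic_square_function_sharp_bounds :
    ∃ c C : ℝ, 0 < c ∧ 0 < C ∧
      ∀ w f : ℝ → ℝ,
        IsWeight1 w → MeasureTheory.LocallyIntegrable (fun x => (w x)⁻¹) volume →
        a2Const w < ⊤ →
        Measurable f → wNorm 2 w f < ⊤ →
        ENNReal.ofReal c * a2Const w ^ (-(1/2) : ℝ) * wNorm 2 w f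
            ≤ (∑' p : ℤ × ℤ,
                ENNReal.ofReal ((haarCoeff f p.1 p.2) ^ 2 * iAvg (dyadInt p.1 p.2) w))
                ^ ((1:ℝ)/2) ∧
        (∑' p : ℤ × ℤ,
            ENNReal.ofReal ((haarCoeff f p.1 p.2) ^ 2 * iAvg (dyadInt p.1 p.2) w))
            ^ ((1:ℝ)/2)
          ≤ ENNReal.ofReal C * a2Const w * wNorm 2 w f := by
  refine ⟨1 / 1004, 2048, by norm_num, by norm_num, ?_⟩
  rintro w f ⟨hw, hpos⟩ hσ hA hf hnorm
  have hQ := iAvg_mul_iAvg_inv_le hA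
  have hQ1 : 1 ≤ (a2Const w).toReal := (one_le_iAvg_mul_iAvg_inv hw hpos hσ 0 0).trans (hQ 0 0)
  have hfw := integrable_sq_mul_of_wNorm_lt_top hw hpos hf hnorm
  have hfloc := locallyIntegrable_of_integrable_sq_mul hpos hσ hf hfw
  have hupper := tsum_haarCoeff_sq_mul_iAvg_le hw hpos hσ hQ hfloc hfw
  have hlower := lintegral_sq_mul_le_tsum_haarCoeff hw hpos hσ hQ hfloc hfw
  rw [wNorm_two_eq, ← ENNReal.ofReal_toReal hA.ne]
  generalize (a2Const w).toReal = Q at *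
  generalize (∑' p : ℤ × ℤ,
    ENNReal.ofReal (haarCoeff f p.1 p.2 ^ 2 * iAvg (dyadInt p.1 p.2) w)) = S at *
  generalize (∫⁻ x, ENNReal.ofReal (f x ^ 2 * w x)) = H at *
  have hhalf : (0 : ℝ) ≤ 1 / 2 := by norm_num
  have hQ0 : 0 < Q := by linarith
  constructor
  · calc ENNReal.ofReal (1 / 1004) * ENNReal.ofReal Q ^ (-(1 / 2) : ℝ) * H ^ (1 / 2 : ℝ)
        ≤ ENNReal.ofReal (1 / 1004) * ENNReal.ofReal Q ^ (-(1 / 2) : ℝ)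
          * (ENNReal.ofReal (1004 * Q) * S) ^ (1 / 2 : ℝ) := by gcongr
      _ = ENNReal.ofReal (1 / 1004 * Q ^ (-(1 / 2) : ℝ) * (1004 * Q) ^ (1 / 2 : ℝ))
          * S ^ (1 / 2 : ℝ) := by
        rw [ENNReal.mul_rpow_of_nonneg _ _ hhalf, ENNReal.ofReal_rpow_of_pos hQ0,
          ENNReal.ofReal_rpow_of_pos (by positivity), ← mul_assoc,
          ENNReal.ofReal_mul (by positivity), ENNReal.ofReal_mul (by positivity)]
      _ ≤ 1 * S ^ (1 / 2 : ℝ) := by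
        gcongr
        rw [ENNReal.ofReal_le_one, Real.mul_rpow (by norm_num) hQ0.le, Real.rpow_neg hQ0.le]
        have h1 : (0 : ℝ) < Q ^ (1 / 2 : ℝ) := by positivity
        have h2 : (1004 : ℝ) ^ (1 / 2 : ℝ) ≤ 1004 :=
          Real.rpow_le_self_of_one_le (by norm_num) (by norm_num)
        field_simp
        linarith
      _ = S ^ (1 / 2 : ℝ) := one_mul _
  · calc S ^ (1 / 2 : ℝ) ≤ (ENNReal.ofReal (2048 * Q ^ 2) * H) ^ (1 / 2 : ℝ) := by gcongr
      _ = ENNReal.ofReal ((2048 * Q ^ 2) ^ (1 / 2 : ℝ)) * H ^ (1 / 2 : ℝ) := by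
        rw [ENNReal.mul_rpow_of_nonneg _ _ hhalf, ENNReal.ofReal_rpow_of_pos (by positivity)]
      _ ≤ ENNReal.ofReal 2048 * ENNReal.ofReal Q * H ^ (1 / 2 : ℝ) := by
        rw [← ENNReal.ofReal_mul (by norm_num)]
        gcongr
        rw [← Real.sqrt_eq_rpow]
        apply Real.sqrt_le_iff.2 ⟨by positivity, by nlinarith [sq_nonneg Q]⟩

end
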